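/- Let F ∈ C⁰([0,T]; L²(ℝ³;ℝ³)) with F(t,·) = 0 for 0 ≤ t ≤ ε (some ε > 0), and suppose C solves ∂_t² C - ΔC = -∫₀ᵗ∫₀ˢ ∇ div F(u,·) du ds + F with C(0) = ∂_t C(0) = 0. Then ∂_t² div C - div F solves the homogeneous scalar wave equation with vanishing data for small time, hence vanishes identically; consequently div C(t) = ∫₀ᵗ∫₀ˢ div F(u,·) du ds and C solves the original system ∂_t² C - ΔC + ∇ div C = F. -/

import Mathlib

open scoped BigOperators

/-- `∂_j F` at `x` for a vector field on ℝ³. -/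
noncomputable def pd (F : (Fin 3 → ℝ) → (Fin 3 → ℝ)) (j : Fin 3) (x : Fin 3 → ℝ) :
    Fin 3 → ℝ :=
  fderiv ℝ F x (Pi.single j 1)

/-- divergence of a vector field on ℝ³. -/
noncomputable def div3 (F : (Fin 3 → ℝ) → (Fin 3 → ℝ)) (x : Fin 3 → ℝ) : ℝ :=
  ∑ i, pd F i x i

/-- gradient of a scalar function on ℝ³. -/
noncomputable def grad3 (f : (Fin 3 → ℝ) → ℝ) (x : Fin 3 → ℝ) : Fin 3 → ℝ :=
  fun i => fderiv ℝ f x (Pi.single i 1)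

/-- componentwise Laplacian of a vector field on ℝ³. -/
noncomputable def lap3 (F : (Fin 3 → ℝ) → (Fin 3 → ℝ)) (x : Fin 3 → ℝ) : Fin 3 → ℝ :=
  fun i => ∑ j, pd (pd F j) j x i

/-!
For smooth `C` and `F`, the divergence `D = div C` solves the scalar reduced equation
`∂ₜ²D - ΔD = -∫₀ᵗ∫₀ˢ Δ div F + div F` with zero data. The residual `w = ∂ₜ²D - div F` is therefore
`ΔD - ∫₀ᵗ∫₀ˢ Δ div F`, so that `w` and `∂ₜw` vanish at `t = 0` and `∂ₜ²w = Δ(∂ₜ²D - div F) = Δw`.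
Uniqueness for the wave equation gives `w = 0`, that is `D = ∫₀ᵗ∫₀ˢ div F`, and the gradient of this
identity turns the reduced equation into the original system.

Uniqueness is proved by an energy estimate with a weight `Φ` which is supported in the backward
light cone `|x - x₀| ≤ R - t` and satisfies `|∇Φ| ≤ -∂ₜΦ`. Such a weight makes the space-time
divergence of the weighted energy and flux nonpositive for every solution, and its compact support
removes the lateral boundary terms.
-/

section

open scoped ContDiff
open MeasureTheory Set

/-! ### Differential operators -/

/-- The partial derivative `∂ⱼF` of a function on `ℝⁿ`. -/
noncomputable def partialDeriv {n : ℕ} {E : Type*} [NormedAddCommGroup E] [NormedSpace ℝ E]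
    (F : (Fin n → ℝ) → E) (j : Fin n) (x : Fin n → ℝ) : E :=
  fderiv ℝ F x (Pi.single j 1)

/-- The divergence of a vector field on `ℝⁿ`. -/
noncomputable def divergence {n : ℕ} (F : (Fin n → ℝ) → Fin n → ℝ) (x : Fin n → ℝ) : ℝ :=
  ∑ i, partialDeriv F i x i

/-- The gradient of a scalar function on `ℝⁿ`, as the vector of its partial derivatives. -/
noncomputable def grad {n : ℕ} (f : (Fin n → ℝ) → ℝ) (x : Fin n → ℝ) : Fin n → ℝ :=
  fun i => partialDeriv f i x

/-- The componentwise Laplacian of a vector field on `ℝⁿ`. -/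
noncomputable def vectorLaplacian {n : ℕ} (F : (Fin n → ℝ) → Fin n → ℝ) (x : Fin n → ℝ) :
    Fin n → ℝ :=
  fun i => ∑ j, partialDeriv (partialDeriv F j) j x i

/-! ### Preliminaries from calculus and measure theory -/

lemma eqOn_integral_iff_of_hasDerivAt {T : ℝ} (hT : 0 < T) {h h' k : ℝ → ℝ}
    (hd : ∀ t, HasDerivAt h (h' t) t) (hk : Continuous k) :
    (∀ t ∈ Icc 0 T, h t = ∫ s in (0 : ℝ)..t, k s) ↔ h 0 = 0 ∧ ∀ t ∈ Icc 0 T, h' t = k t := by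
  refine ⟨fun hint => ⟨?_, fun t ht => ?_⟩, fun ⟨h0, hderiv⟩ t ht => ?_⟩
  · simpa using hint 0 ⟨le_rfl, hT.le⟩
  · have hprim : HasDerivWithinAt h (k t) (Icc 0 T) t :=
      (hk.integral_hasStrictDerivAt 0 t).hasDerivAt.hasDerivWithinAt.congr hint (hint t ht)
    exact (uniqueDiffOn_Icc hT t ht).eq_deriv _ (hd t).hasDerivWithinAt hprim
  · have hd' : ∀ s ∈ uIcc 0 t, HasDerivAt h (k s) s := fun s hs => by
      rw [uIcc_of_le ht.1] at hs
      exact hderiv s ⟨hs.1, hs.2.trans ht.2⟩ ▸ hd s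
    rw [intervalIntegral.integral_eq_sub_of_hasDerivAt hd' (hk.intervalIntegrable 0 t), h0,
      sub_zero]

lemma intervalIntegral_apply {ι : Type*} [Fintype ι] {h : ℝ → ι → ℝ} (hh : Continuous h)
    (a b : ℝ) (i : ι) : (∫ s in a..b, h s) i = ∫ s in a..b, h s i :=
  ((ContinuousLinearMap.proj (R := ℝ) (φ := fun _ : ι => ℝ) i).intervalIntegral_comp_comm
    (hh.intervalIntegrable a b)).symm

lemma integral_integral_apply {ι : Type*} [Fintype ι] {h : ℝ → ι → ℝ} (hh : Continuous h)
    (t : ℝ) (i : ι) :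
    (∫ s in (0 : ℝ)..t, ∫ u in (0 : ℝ)..s, h u) i
      = ∫ s in (0 : ℝ)..t, ∫ u in (0 : ℝ)..s, h u i := by
  rw [intervalIntegral_apply
    (intervalIntegral.continuous_primitive (fun a b => hh.intervalIntegrable a b) 0)]
  simp only [intervalIntegral_apply hh]

lemma volume_preserving_consEquivL (n : ℕ) :
    MeasurePreserving (Fin.consEquivL ℝ fun _ : Fin (n + 1) => ℝ) volume volume := by
  have h := (volume_preserving_piFinSuccAbove (fun _ : Fin (n + 1) => ℝ) 0).symm
  have h_eq : ⇑(Fin.consEquivL ℝ fun _ : Fin (n + 1) => ℝ)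
      = (MeasurableEquiv.piFinSuccAbove (fun _ : Fin (n + 1) => ℝ) 0).symm := by
    funext z
    exact (Fin.insertNth_zero' z.1 z.2).symm
  rwa [h_eq]

lemma setIntegral_lateral_face_eq_zero {n : ℕ} {f : ℝ × (Fin n → ℝ) → ℝ} {t₁ t₂ : ℝ}
    {a b : Fin n → ℝ} {j : Fin n} {c : ℝ}
    (hf : ∀ t ∈ Icc t₁ t₂, ∀ x, x j = c → f (t, x) = 0) :
    ∫ y in Icc (Fin.consEquivL ℝ (fun _ => ℝ) (t₁, a) ∘ j.succ.succAbove)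
        (Fin.consEquivL ℝ (fun _ => ℝ) (t₂, b) ∘ j.succ.succAbove),
      f ((Fin.consEquivL ℝ fun _ => ℝ).symm (j.succ.insertNth c y)) = 0 := by
  refine setIntegral_eq_zero_of_forall_eq_zero fun y hy => ?_
  obtain ⟨k, hk⟩ := Fin.exists_succAbove_eq (Fin.succ_ne_zero j).symm
  have htime : (j.succ.insertNth c y : Fin (n + 1) → ℝ) 0 = y k := by
    rw [← hk, Fin.insertNth_apply_succAbove]
  have hk_mem : y k ∈ Icc t₁ t₂ := by simpa [hk] using And.intro (hy.1 k) (hy.2 k)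
  refine hf _ (htime ▸ hk_mem) _ ?_
  exact Fin.insertNth_apply_same (α := fun _ => ℝ) j.succ c y

lemma eq_zero_of_setIntegral_nonpos {X : Type*} [TopologicalSpace X] [T2Space X]
    [MeasurableSpace X] [OpensMeasurableSpace X] {μ : Measure X} [μ.IsOpenPosMeasure]
    [IsFiniteMeasureOnCompacts μ] {f : X → ℝ} (hf : Continuous f) (hf_nonneg : ∀ x, 0 ≤ f x)
    {K : Set X} (hK : IsCompact K) (hint : ∫ x in K, f x ∂μ ≤ 0) {x : X} (hx : x ∈ interior K) :
    f x = 0 := by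
  have hae : f =ᵐ[μ.restrict K] 0 :=
    (setIntegral_eq_zero_iff_of_nonneg_ae (.of_forall hf_nonneg)
      (hf.continuousOn.integrableOn_compact hK)).1 (hint.antisymm (integral_nonneg hf_nonneg))
  exact Measure.eqOn_open_of_ae_eq (ae_restrict_of_ae_restrict_of_subset interior_subset hae)
    isOpen_interior hf.continuousOn continuousOn_const hx

lemma quadForm_nonpos {n : ℕ} {τ : ℝ} {ξ : Fin n → ℝ} (hτ : τ ≤ 0)
    (hξ : ∑ j, ξ j ^ 2 ≤ τ ^ 2) (a : ℝ) (p : Fin n → ℝ) :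
    τ * (a ^ 2 + ∑ j, p j ^ 2) - 2 * a * ∑ j, p j * ξ j ≤ 0 := by
  set P := ∑ j, p j ^ 2
  set S := ∑ j, p j * ξ j
  have hP : 0 ≤ P := Finset.sum_nonneg fun j _ => sq_nonneg (p j)
  have hS : S ^ 2 ≤ P * τ ^ 2 :=
    (Finset.sum_mul_sq_le_sq_mul_sq _ p ξ).trans (mul_le_mul_of_nonneg_left hξ hP)
  have habs : |2 * a * S| ≤ |τ * (a ^ 2 + P)| := by
    rw [← sq_le_sq]
    calc (2 * a * S) ^ 2 = 4 * a ^ 2 * S ^ 2 := by ring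
      _ ≤ 4 * a ^ 2 * (P * τ ^ 2) := by gcongr
      _ = τ ^ 2 * (4 * a ^ 2 * P) := by ring
      _ ≤ τ ^ 2 * (a ^ 2 + P) ^ 2 := by gcongr; exact four_mul_le_sq_add (a ^ 2) P
      _ = (τ * (a ^ 2 + P)) ^ 2 := by ring
  rw [abs_of_nonpos (mul_nonpos_of_nonpos_of_nonneg hτ (by positivity))] at habs
  linarith [neg_abs_le (2 * a * S)]

lemma deriv_expNegInvGlue_of_neg {s : ℝ} (hs : s < 0) : deriv expNegInvGlue s = 0 := by
  have h : expNegInvGlue =ᶠ[nhds s] fun _ => 0 := by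
    filter_upwards [Iio_mem_nhds hs] with y hy using expNegInvGlue.zero_of_nonpos hy.le
  rw [h.deriv_eq, deriv_const]

/-! ### Smooth functions -/

/-- The subalgebra of smooth functions in the algebra of all functions `E → ℝ`. -/
def smoothSubalgebra (E : Type*) [NormedAddCommGroup E] [NormedSpace ℝ E] :
    Subalgebra ℝ (E → ℝ) where
  carrier := {g | ContDiff ℝ ∞ g}
  mul_mem' ha hb := mem_ofPred.2 ((mem_ofPred.1 ha).mul (mem_ofPred.1 hb))
  add_mem' ha hb := mem_ofPred.2 ((mem_ofPred.1 ha).add (mem_ofPred.1 hb))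
  algebraMap_mem' _ := mem_ofPred.2 contDiff_const

/-- The algebra of smooth real functions on `E`, on which derivations can act. -/
abbrev SmoothFun (E : Type*) [NormedAddCommGroup E] [NormedSpace ℝ E] : Type _ :=
  smoothSubalgebra E

namespace SmoothFun

section NormedSpace

variable {E : Type*} [NormedAddCommGroup E] [NormedSpace ℝ E]

instance : CoeFun (SmoothFun E) fun _ => E → ℝ := ⟨Subtype.val⟩

lemma contDiff (g : SmoothFun E) : ContDiff ℝ ∞ g := mem_ofPred.1 g.2

/-- A function bundled with a proof of its smoothness. -/
def ofContDiff (g : E → ℝ) (hg : ContDiff ℝ ∞ g) : SmoothFun E := ⟨g, mem_ofPred.2 hg⟩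

@[simp]
lemma ofContDiff_apply {g : E → ℝ} (hg : ContDiff ℝ ∞ g) (z : E) : ofContDiff g hg z = g z := rfl

lemma continuous (g : SmoothFun E) : Continuous g := g.contDiff.continuous

lemma differentiable (g : SmoothFun E) : Differentiable ℝ g :=
  g.contDiff.differentiable (by simp)

lemma hasFDerivAt (g : SmoothFun E) (z : E) : HasFDerivAt g (fderiv ℝ g z) z :=
  (g.differentiable z).hasFDerivAt

/-- The derivative in the constant direction `v`, as a derivation of the algebra of smooth
functions. -/
noncomputable def dirDeriv (v : E) : Derivation ℝ (SmoothFun E) (SmoothFun E) :=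
  Derivation.mk'
    { toFun g := ofContDiff (fun z => fderiv ℝ g z v)
        ((g.contDiff.fderiv_right (m := ∞) (by simp)).clm_apply contDiff_const)
      map_add' a b := by
        ext z
        simp [fderiv_add (a.differentiable z) (b.differentiable z)]
      map_smul' c a := by
        ext z
        simp [fderiv_const_smul (a.differentiable z)] }
    fun a b => by
      ext z
      simp [fderiv_mul (a.differentiable z) (b.differentiable z)]

lemma dirDeriv_apply (v : E) (g : SmoothFun E) (z : E) : dirDeriv v g z = fderiv ℝ g z v := rfl

lemma dirDeriv_dirDeriv_apply (v w : E) (g : SmoothFun E) (z : E) :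
    dirDeriv v (dirDeriv w g) z = fderiv ℝ (fderiv ℝ g) z v w := by
  have hg : DifferentiableAt ℝ (fderiv ℝ g) z :=
    (g.contDiff.fderiv_right (m := ∞) (by simp)).differentiable (by simp) z
  change fderiv ℝ (fun y => fderiv ℝ g y w) z v = _
  simp [fderiv_clm_apply hg (differentiableAt_const w)]

lemma dirDeriv_comm (v w : E) (g : SmoothFun E) :
    dirDeriv v (dirDeriv w g) = dirDeriv w (dirDeriv v g) := by
  ext z
  rw [dirDeriv_dirDeriv_apply, dirDeriv_dirDeriv_apply]
  exact (contDiff_infty.1 g.contDiff 2).contDiffAt.isSymmSndFDerivAt (by simp) v w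

lemma dirDeriv_sq (v : E) (g : SmoothFun E) :
    dirDeriv v (g ^ 2) = (2 : ℝ) • (g * dirDeriv v g) := by
  rw [sq, Derivation.leibniz, smul_eq_mul, two_smul]

/-- The composition `φ ∘ g` with a smooth function of one variable. -/
def comp (φ : ℝ → ℝ) (hφ : ContDiff ℝ ∞ φ) (g : SmoothFun E) : SmoothFun E :=
  ofContDiff (φ ∘ g) (hφ.comp g.contDiff)

lemma dirDeriv_comp (φ : ℝ → ℝ) (hφ : ContDiff ℝ ∞ φ) (g : SmoothFun E) (v z : E) :
    dirDeriv v (comp φ hφ g) z = deriv φ (g z) * dirDeriv v g z := by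
  have h := ((hφ.differentiable (by simp)) (g z)).hasDerivAt.comp_hasFDerivAt z (g.hasFDerivAt z)
  change fderiv ℝ (φ ∘ g) z v = _
  simp [h.fderiv, dirDeriv_apply]

/-- A continuous linear functional as a smooth function. -/
def ofCLM (ℓ : E →L[ℝ] ℝ) : SmoothFun E := ofContDiff ℓ ℓ.contDiff

@[simp]
lemma ofCLM_apply (ℓ : E →L[ℝ] ℝ) (z : E) : ofCLM ℓ z = ℓ z := rfl

lemma dirDeriv_ofCLM (ℓ : E →L[ℝ] ℝ) (v : E) :
    dirDeriv v (ofCLM ℓ) = algebraMap ℝ (SmoothFun E) (ℓ v) := by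
  ext z
  simp [dirDeriv_apply, ofCLM, ofContDiff]

end NormedSpace
end SmoothFun

/-- Smooth real functions of a time `t : ℝ` and a position `x : Fin n → ℝ`. -/
abbrev SpaceTimeFun (n : ℕ) : Type := SmoothFun (ℝ × (Fin n → ℝ))

namespace SmoothFun

variable {n : ℕ}

/-- The time derivative `∂ₜ`. -/
noncomputable def timeDeriv : Derivation ℝ (SpaceTimeFun n) (SpaceTimeFun n) := dirDeriv (1, 0)

/-- The derivative `∂ⱼ` in the `j`-th space coordinate. -/
noncomputable def spaceDeriv (j : Fin n) : Derivation ℝ (SpaceTimeFun n) (SpaceTimeFun n) :=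
  dirDeriv (0, Pi.single j 1)

local notation "∂ₜ" => timeDeriv
local notation "∂ₓ" => spaceDeriv

lemma hasDerivAt_time (g : SpaceTimeFun n) (t : ℝ) (x : Fin n → ℝ) :
    HasDerivAt (fun t => g (t, x)) (∂ₜ g (t, x)) t :=
  (g.hasFDerivAt (t, x)).comp_hasDerivAt t ((hasDerivAt_id t).prodMk (hasDerivAt_const t x))

lemma partialDeriv_slice (g : SpaceTimeFun n) (t : ℝ) (x : Fin n → ℝ) (j : Fin n) :
    partialDeriv (fun x => g (t, x)) j x = ∂ₓ j g (t, x) := by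
  have h := (g.hasFDerivAt (t, x)).comp x ((hasFDerivAt_const t x).prodMk (hasFDerivAt_id x))
  change fderiv ℝ (g ∘ fun x => (t, x)) x _ = _
  rw [h.fderiv]
  rfl

lemma spaceDeriv_timeDeriv (j : Fin n) (g : SpaceTimeFun n) : ∂ₓ j (∂ₜ g) = ∂ₜ (∂ₓ j g) :=
  dirDeriv_comm _ _ g

lemma spaceDeriv_congr {g g' : SpaceTimeFun n} {t : ℝ} (h : ∀ x, g (t, x) = g' (t, x))
    (j : Fin n) (x : Fin n → ℝ) : ∂ₓ j g (t, x) = ∂ₓ j g' (t, x) := by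
  simp only [← partialDeriv_slice, h]

/-- The spatial divergence of a time-dependent vector field given by its components. -/
noncomputable def div (c : Fin n → SpaceTimeFun n) : SpaceTimeFun n := ∑ i, ∂ₓ i (c i)

/-- The spatial Laplacian. -/
noncomputable def lap (g : SpaceTimeFun n) : SpaceTimeFun n := div fun j => ∂ₓ j g

lemma div_apply (c : Fin n → SpaceTimeFun n) (z : ℝ × (Fin n → ℝ)) :
    div c z = ∑ i, ∂ₓ i (c i) z := by
  simp [div]

lemma dirDeriv_div (v : ℝ × (Fin n → ℝ)) (c : Fin n → SpaceTimeFun n) :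
    dirDeriv v (div c) = div fun i => dirDeriv v (c i) := by
  simp only [div, map_sum, spaceDeriv, dirDeriv_comm v]

lemma dirDeriv_lap (v : ℝ × (Fin n → ℝ)) (g : SpaceTimeFun n) :
    dirDeriv v (lap g) = lap (dirDeriv v g) := by
  simp only [lap, dirDeriv_div, spaceDeriv, dirDeriv_comm v]

lemma timeDeriv_div (c : Fin n → SpaceTimeFun n) : ∂ₜ (div c) = div fun i => ∂ₜ (c i) :=
  dirDeriv_div _ c

lemma lap_div (c : Fin n → SpaceTimeFun n) : lap (div c) = div fun i => lap (c i) := by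
  have hlap : lap (div c) = ∑ i, lap (∂ₓ i (c i)) := by
    simp only [lap, div, map_sum]
    exact Finset.sum_comm
  rw [hlap, div]
  exact Finset.sum_congr rfl fun i _ => (dirDeriv_lap _ _).symm

lemma div_sub (c d : Fin n → SpaceTimeFun n) : div (fun i => c i - d i) = div c - div d := by
  simp only [div, map_sub, Finset.sum_sub_distrib]

lemma div_neg (c : Fin n → SpaceTimeFun n) : div (fun i => -c i) = -div c := by
  simp only [div, map_neg, Finset.sum_neg_distrib]

lemma lap_sub (g g' : SpaceTimeFun n) : lap (g - g') = lap g - lap g' := by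
  simp only [lap, map_sub, div_sub]

lemma div_smul (r : ℝ) (c : Fin n → SpaceTimeFun n) : div (fun i => r • c i) = r • div c := by
  simp only [div, Derivation.map_smul, Finset.smul_sum]

lemma div_mul (Φ : SpaceTimeFun n) (c : Fin n → SpaceTimeFun n) :
    div (fun j => Φ * c j) = Φ * div c + ∑ j, c j * ∂ₓ j Φ := by
  simp only [div, Derivation.leibniz, smul_eq_mul, Finset.sum_add_distrib, Finset.mul_sum]

lemma div_congr {c d : Fin n → SpaceTimeFun n} {t : ℝ} (h : ∀ i x, c i (t, x) = d i (t, x))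
    (x : Fin n → ℝ) : div c (t, x) = div d (t, x) := by
  simp only [div_apply, spaceDeriv_congr (h _)]

/-- The time-dependent vector field on `ℝⁿ` with components `c`. -/
def vectorField (c : Fin n → SpaceTimeFun n) (t : ℝ) (x : Fin n → ℝ) : Fin n → ℝ :=
  fun i => c i (t, x)

lemma exists_eq_vectorField {C : ℝ → (Fin n → ℝ) → Fin n → ℝ}
    (hC : ContDiff ℝ ∞ (Function.uncurry C)) : ∃ c, C = vectorField c :=
  ⟨fun i => ofContDiff (fun z => C z.1 z.2 i) (contDiff_pi.1 hC i), rfl⟩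

lemma vectorField_sub (c d : Fin n → SpaceTimeFun n) (t : ℝ) (x : Fin n → ℝ) :
    vectorField (fun i => c i - d i) t x = vectorField c t x - vectorField d t x := rfl

lemma vectorField_neg (c : Fin n → SpaceTimeFun n) (t : ℝ) (x : Fin n → ℝ) :
    vectorField (fun i => -c i) t x = -vectorField c t x := rfl

lemma deriv_time (g : SpaceTimeFun n) (x : Fin n → ℝ) :
    deriv (fun t => g (t, x)) = fun t => ∂ₜ g (t, x) :=
  funext fun t => (hasDerivAt_time g t x).deriv

lemma deriv_vectorField (c : Fin n → SpaceTimeFun n) (x : Fin n → ℝ) :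
    deriv (fun t => vectorField c t x) = fun t => vectorField (fun i => ∂ₜ (c i)) t x :=
  funext fun t => (hasDerivAt_pi.2 fun i => hasDerivAt_time (c i) t x).deriv

lemma partialDeriv_vectorField (c : Fin n → SpaceTimeFun n) (t : ℝ) (j : Fin n) :
    partialDeriv (vectorField c t) j = vectorField (fun i => ∂ₓ j (c i)) t := by
  funext x i
  have h : HasFDerivAt (vectorField c t) _ x := hasFDerivAt_pi.2 fun i =>
    ((c i).differentiable.comp (by fun_prop : Differentiable ℝ fun x => (t, x)) x).hasFDerivAt
  rw [partialDeriv, h.fderiv]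
  exact partialDeriv_slice (c i) t x j

lemma divergence_vectorField (c : Fin n → SpaceTimeFun n) (t : ℝ) :
    divergence (vectorField c t) = fun x => div c (t, x) := by
  funext x
  simp only [divergence, partialDeriv_vectorField, div_apply, vectorField]

lemma vectorLaplacian_vectorField (c : Fin n → SpaceTimeFun n) (t : ℝ) :
    vectorLaplacian (vectorField c t) = vectorField (fun i => lap (c i)) t := by
  funext x i
  simp only [vectorLaplacian, partialDeriv_vectorField, vectorField, lap, div_apply]

lemma grad_slice (g : SpaceTimeFun n) (t : ℝ) :
    grad (fun x => g (t, x)) = vectorField (fun i => ∂ₓ i g) t := by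
  funext x i
  exact partialDeriv_slice g t x i

lemma continuous_time (g : SpaceTimeFun n) (x : Fin n → ℝ) : Continuous fun t => g (t, x) :=
  g.continuous.comp (by fun_prop)

/-! ### Double primitives in time -/

/-- `g` vanishes together with `∂ₜg` at time `0`, and `∂ₜ²g = h` on `[0,T] × ℝⁿ`; for `0 < T` this
is the relation `g = ∫₀ᵗ∫₀ˢ h` on `[0,T] × ℝⁿ` in differential form. -/
structure IsDoublePrimitive (T : ℝ) (g h : SpaceTimeFun n) : Prop where
  eq_zero : ∀ x, g (0, x) = 0
  timeDeriv_eq_zero : ∀ x, ∂ₜ g (0, x) = 0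
  timeDeriv_timeDeriv_eq : ∀ t ∈ Icc 0 T, ∀ x, ∂ₜ (∂ₜ g) (t, x) = h (t, x)

lemma isDoublePrimitive_iff {T : ℝ} (hT : 0 < T) {g h : SpaceTimeFun n} :
    IsDoublePrimitive T g h ↔
      ∀ t ∈ Icc 0 T, ∀ x, g (t, x) = ∫ s in (0 : ℝ)..t, ∫ u in (0 : ℝ)..s, h (u, x) := by
  have hiff : ∀ x, (∀ t ∈ Icc 0 T, g (t, x) = ∫ s in (0 : ℝ)..t, ∫ u in (0 : ℝ)..s, h (u, x)) ↔
      g (0, x) = 0 ∧ ∂ₜ g (0, x) = 0 ∧ ∀ t ∈ Icc 0 T, ∂ₜ (∂ₜ g) (t, x) = h (t, x) := fun x => by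
    have hh := continuous_time h x
    rw [eqOn_integral_iff_of_hasDerivAt hT (fun t => hasDerivAt_time g t x)
      (intervalIntegral.continuous_primitive (fun a b => hh.intervalIntegrable a b) 0),
      eqOn_integral_iff_of_hasDerivAt hT (fun t => hasDerivAt_time (∂ₜ g) t x) hh]
  refine ⟨fun hg t ht x => ?_, fun hg => ?_⟩
  · exact (hiff x).2 ⟨hg.eq_zero x, hg.timeDeriv_eq_zero x,
      fun t ht => hg.timeDeriv_timeDeriv_eq t ht x⟩ t ht
  · have hg' := fun x => (hiff x).1 fun t ht => hg t ht x
    exact ⟨fun x => (hg' x).1, fun x => (hg' x).2.1, fun t ht x => (hg' x).2.2 t ht⟩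

lemma forall_isDoublePrimitive_iff {T : ℝ} (hT : 0 < T) {c d : Fin n → SpaceTimeFun n} :
    (∀ i, IsDoublePrimitive T (c i) (d i)) ↔ ∀ t ∈ Icc 0 T, ∀ x,
      vectorField c t x = ∫ s in (0 : ℝ)..t, ∫ u in (0 : ℝ)..s, vectorField d u x := by
  have hd : ∀ x, Continuous fun u => vectorField d u x := fun x =>
    continuous_pi fun i => continuous_time (d i) x
  simp only [isDoublePrimitive_iff hT, funext_iff, integral_integral_apply (hd _)]
  exact ⟨fun h t ht x i => h i t ht x, fun h i t ht x => h t ht x i⟩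

namespace IsDoublePrimitive

variable {T : ℝ} {g h : SpaceTimeFun n}

lemma add {g' h' : SpaceTimeFun n} (hg : IsDoublePrimitive T g h)
    (hg' : IsDoublePrimitive T g' h') : IsDoublePrimitive T (g + g') (h + h') where
  eq_zero x := by simp [hg.eq_zero, hg'.eq_zero]
  timeDeriv_eq_zero x := by simp [hg.timeDeriv_eq_zero, hg'.timeDeriv_eq_zero]
  timeDeriv_timeDeriv_eq t ht x := by
    simp [hg.timeDeriv_timeDeriv_eq t ht, hg'.timeDeriv_timeDeriv_eq t ht]

lemma spaceDeriv (hg : IsDoublePrimitive T g h) (j : Fin n) :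
    IsDoublePrimitive T (∂ₓ j g) (∂ₓ j h) where
  eq_zero x := by simpa using spaceDeriv_congr (g' := 0) hg.eq_zero j x
  timeDeriv_eq_zero x := by
    simpa [spaceDeriv_timeDeriv] using spaceDeriv_congr (g' := 0) hg.timeDeriv_eq_zero j x
  timeDeriv_timeDeriv_eq t ht x := by
    simpa only [spaceDeriv_timeDeriv] using
      spaceDeriv_congr (hg.timeDeriv_timeDeriv_eq t ht) j x

lemma div {c d : Fin n → SpaceTimeFun n} (hc : ∀ i, IsDoublePrimitive T (c i) (d i)) :
    IsDoublePrimitive T (div c) (div d) where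
  eq_zero x := by
    simp [div_apply, fun i => ((hc i).spaceDeriv i).eq_zero]
  timeDeriv_eq_zero x := by
    simp [SmoothFun.div, fun i => ((hc i).spaceDeriv i).timeDeriv_eq_zero]
  timeDeriv_timeDeriv_eq t ht x := by
    simp [SmoothFun.div, fun i => ((hc i).spaceDeriv i).timeDeriv_timeDeriv_eq t ht]

lemma lap (hg : IsDoublePrimitive T g h) : IsDoublePrimitive T (lap g) (lap h) :=
  .div fun i => hg.spaceDeriv i

end IsDoublePrimitive

/-! ### Uniqueness for the wave equation -/

lemma integral_timeDeriv_add_div (G₀ : SpaceTimeFun n) (G : Fin n → SpaceTimeFun n)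
    {t₁ t₂ : ℝ} (ht : t₁ ≤ t₂) {a b : Fin n → ℝ} (hab : a ≤ b)
    (hG : ∀ t ∈ Icc t₁ t₂, ∀ x j, x j = a j ∨ x j = b j → G j (t, x) = 0) :
    ∫ z in Icc (t₁, a) (t₂, b), (∂ₜ G₀ + div G) z
      = (∫ x in Icc a b, G₀ (t₂, x)) - ∫ x in Icc a b, G₀ (t₁, x) := by
  let e : (ℝ × (Fin n → ℝ)) ≃L[ℝ] (Fin (n + 1) → ℝ) := Fin.consEquivL ℝ fun _ => ℝ
  let H : Fin (n + 1) → SpaceTimeFun n := Fin.cons G₀ G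
  have e_le : ∀ x y, e x ≤ e y ↔ x ≤ y := fun x y => Fin.cons_le_cons (α := fun _ => ℝ)
  have e_single_zero : e.symm (Pi.single 0 1) = (1, 0) := by
    refine e.symm_apply_eq.2 (funext (Fin.cases rfl fun k => ?_))
    exact Pi.single_eq_of_ne (Fin.succ_ne_zero k) 1
  have e_single_succ : ∀ i : Fin n, e.symm (Pi.single i.succ 1) = (0, Pi.single i 1) := by
    refine fun i => e.symm_apply_eq.2 (funext (Fin.cases ?_ fun k => ?_))
    · exact Pi.single_eq_of_ne (Fin.succ_ne_zero i).symm 1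
    · change _ = (Pi.single i 1 : Fin n → ℝ) k
      simp [Pi.single_apply]
  rw [integral_divergence_of_hasFDerivAt_off_countable_of_equiv e e_le
    (volume_preserving_consEquivL n) (fun i => H i)
    (fun i z => fderiv ℝ (H i) z) ∅ countable_empty (t₁, a) (t₂, b) (Prod.mk_le_mk.2 ⟨ht, hab⟩)
    (fun i => (H i).continuous.continuousOn) (fun z _ i => (H i).hasFDerivAt z)
    (∂ₜ G₀ + div G : SpaceTimeFun n) ?_ (SmoothFun.continuous _).continuousOn.integrableOn_Icc]
  · rw [Fin.sum_univ_succ, Finset.sum_eq_zero, add_zero]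
    · simp only [Fin.insertNth_zero']
      rfl
    · intro j _
      refine (congrArg₂ _ ?_ ?_).trans (sub_self (0 : ℝ))
      · exact setIntegral_lateral_face_eq_zero fun t ht x hx => hG t ht x j (.inr hx)
      · exact setIntegral_lateral_face_eq_zero fun t ht x hx => hG t ht x j (.inl hx)
  · intro z
    simp [Fin.sum_univ_succ, e_single_zero, e_single_succ, div_apply, H, timeDeriv, spaceDeriv,
      dirDeriv_apply]

/-- Twice the energy density of the wave equation, `(∂ₜv)² + |∇v|²`. -/
noncomputable def energyDensity (v : SpaceTimeFun n) : SpaceTimeFun n :=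
  ∂ₜ v ^ 2 + ∑ j, ∂ₓ j v ^ 2

lemma energyDensity_apply (v : SpaceTimeFun n) (z : ℝ × (Fin n → ℝ)) :
    energyDensity v z = ∂ₜ v z ^ 2 + ∑ j, ∂ₓ j v z ^ 2 := by
  simp [energyDensity]

/-- The energy flux `-2 ∂ₜv ∇v` belonging to `energyDensity`. -/
noncomputable def energyFlux (v : SpaceTimeFun n) (j : Fin n) : SpaceTimeFun n :=
  (-2 : ℝ) • (∂ₜ v * ∂ₓ j v)

lemma timeDeriv_energyDensity_add_div_energyFlux (v : SpaceTimeFun n) :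
    ∂ₜ (energyDensity v) + div (energyFlux v) = (2 : ℝ) • (∂ₜ v * (∂ₜ (∂ₜ v) - lap v)) := by
  have hdensity : ∂ₜ (energyDensity v)
      = (2 : ℝ) • (∂ₜ v * ∂ₜ (∂ₜ v)) + (2 : ℝ) • ∑ j, ∂ₓ j v * ∂ₜ (∂ₓ j v) := by
    rw [energyDensity, map_add, map_sum, Finset.smul_sum]
    exact congrArg₂ _ (dirDeriv_sq _ _) (Finset.sum_congr rfl fun j _ => dirDeriv_sq _ _)
  have hflux : div (energyFlux v)
      = (-2 : ℝ) • (∂ₜ v * lap v + ∑ j, ∂ₓ j v * ∂ₜ (∂ₓ j v)) := by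
    simp only [← spaceDeriv_timeDeriv]
    exact (div_smul _ _).trans (congrArg _ (div_mul _ _))
  rw [hdensity, hflux, mul_sub]
  module

lemma timeDeriv_mul_energyDensity_add_div (Φ v : SpaceTimeFun n) :
    ∂ₜ (Φ * energyDensity v) + (div fun j => Φ * energyFlux v j)
      = (2 : ℝ) • (Φ * ∂ₜ v * (∂ₜ (∂ₜ v) - lap v))
        + (∂ₜ Φ * energyDensity v + ∑ j, ∂ₓ j Φ * energyFlux v j) := by
  rw [div_mul, Derivation.leibniz, smul_eq_mul, smul_eq_mul, mul_assoc Φ, ← mul_smul_comm,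
    ← timeDeriv_energyDensity_add_div_energyFlux]
  simp only [mul_comm (∂ₓ _ Φ)]
  ring

lemma timeDeriv_mul_energyDensity_add_div_nonpos {Φ v : SpaceTimeFun n} {z : ℝ × (Fin n → ℝ)}
    (hτ : ∂ₜ Φ z ≤ 0) (hξ : ∑ j, ∂ₓ j Φ z ^ 2 ≤ ∂ₜ Φ z ^ 2) (hv : ∂ₜ (∂ₜ v) z = lap v z) :
    (∂ₜ (Φ * energyDensity v) + div fun j => Φ * energyFlux v j) z ≤ 0 := by
  rw [timeDeriv_mul_energyDensity_add_div]
  convert quadForm_nonpos hτ hξ (∂ₜ v z) (fun j => ∂ₓ j v z) using 1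
  have hflux : ∑ j, ∂ₓ j Φ z * energyFlux v j z = -(2 * ∂ₜ v z * ∑ j, ∂ₓ j v z * ∂ₓ j Φ z) := by
    rw [Finset.mul_sum, ← Finset.sum_neg_distrib]
    refine Finset.sum_congr rfl fun j _ => ?_
    simp only [energyFlux, SetLike.val_smul, Pi.smul_apply, MulMemClass.coe_mul, Pi.mul_apply,
      smul_eq_mul]
    ring
  simp [hv, energyDensity_apply, hflux, ← sub_eq_add_neg]

lemma setIntegral_mul_energyDensity_le {Φ v : SpaceTimeFun n} {t₀ : ℝ} (ht₀ : 0 ≤ t₀)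
    {a b : Fin n → ℝ} (hab : a ≤ b)
    (hτ : ∀ t ∈ Icc 0 t₀, ∀ x, ∂ₜ Φ (t, x) ≤ 0)
    (hξ : ∀ t ∈ Icc 0 t₀, ∀ x, ∑ j, ∂ₓ j Φ (t, x) ^ 2 ≤ ∂ₜ Φ (t, x) ^ 2)
    (hΦ : ∀ t ∈ Icc 0 t₀, ∀ x j, x j = a j ∨ x j = b j → Φ (t, x) = 0)
    (hv : ∀ t ∈ Icc 0 t₀, ∀ x, ∂ₜ (∂ₜ v) (t, x) = lap v (t, x)) :
    ∫ x in Icc a b, (Φ * energyDensity v) (t₀, x) ≤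
      ∫ x in Icc a b, (Φ * energyDensity v) (0, x) := by
  rw [← sub_nonpos, ← integral_timeDeriv_add_div _ (fun j => Φ * energyFlux v j) ht₀ hab]
  · refine setIntegral_nonpos measurableSet_Icc fun z hz => ?_
    have hz_time : z.1 ∈ Icc 0 t₀ := ⟨hz.1.1, hz.2.1⟩
    exact timeDeriv_mul_energyDensity_add_div_nonpos (hτ _ hz_time z.2) (hξ _ hz_time z.2)
      (hv _ hz_time z.2)
  · intro t ht x j hx
    simp [hΦ t ht x j hx]

/-- The quadratic form `(R - t)² - |x - x₀|²`, positive for `t < R` exactly inside the backward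
light cone with vertex `(R, x₀)`. -/
noncomputable def coneFun (R : ℝ) (x₀ : Fin n → ℝ) : SpaceTimeFun n :=
  (algebraMap ℝ _ R - ofCLM (.fst ℝ ℝ _)) ^ 2
    - ∑ j, (ofCLM (.proj j ∘L .snd ℝ ℝ _) - algebraMap ℝ _ (x₀ j)) ^ 2

lemma coneFun_apply (R : ℝ) (x₀ : Fin n → ℝ) (t : ℝ) (x : Fin n → ℝ) :
    coneFun R x₀ (t, x) = (R - t) ^ 2 - ∑ j, (x j - x₀ j) ^ 2 := by
  simp [coneFun]

lemma timeDeriv_coneFun (R : ℝ) (x₀ : Fin n → ℝ) (t : ℝ) (x : Fin n → ℝ) :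
    ∂ₜ (coneFun R x₀) (t, x) = 2 * (t - R) := by
  simp [coneFun, timeDeriv, dirDeriv_sq, dirDeriv_ofCLM, -Derivation.leibniz_pow]

lemma spaceDeriv_coneFun (R : ℝ) (x₀ : Fin n → ℝ) (j : Fin n) (t : ℝ) (x : Fin n → ℝ) :
    ∂ₓ j (coneFun R x₀) (t, x) = -2 * (x j - x₀ j) := by
  simp [coneFun, spaceDeriv, dirDeriv_sq, dirDeriv_ofCLM, Pi.single_apply,
    -Derivation.leibniz_pow]

/-- The smooth weight of the energy estimate, `exp (-1 / q)` where `q = coneFun R x₀` is positive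
and `0` elsewhere. -/
noncomputable def coneWeight (R : ℝ) (x₀ : Fin n → ℝ) : SpaceTimeFun n :=
  comp expNegInvGlue expNegInvGlue.contDiff (coneFun R x₀)

lemma coneWeight_nonneg (R : ℝ) (x₀ : Fin n → ℝ) (z : ℝ × (Fin n → ℝ)) :
    0 ≤ coneWeight R x₀ z :=
  expNegInvGlue.nonneg _

lemma coneWeight_center_pos {R t : ℝ} (ht : t < R) (x₀ : Fin n → ℝ) :
    0 < coneWeight R x₀ (t, x₀) := by
  refine expNegInvGlue.pos_of_pos ?_
  simpa [coneFun_apply] using pow_pos (sub_pos.2 ht) 2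

lemma coneWeight_eq_zero {R t : ℝ} (ht : t ∈ Icc 0 R) {x₀ x : Fin n → ℝ} {j : Fin n}
    (hx : x j = x₀ j - R ∨ x j = x₀ j + R) : coneWeight R x₀ (t, x) = 0 := by
  refine expNegInvGlue.zero_of_nonpos ?_
  have hR : (x j - x₀ j) ^ 2 = R ^ 2 := by rcases hx with hx | hx <;> rw [hx] <;> ring
  have hsum : R ^ 2 ≤ ∑ k, (x k - x₀ k) ^ 2 :=
    hR ▸ Finset.single_le_sum (fun k _ => sq_nonneg (x k - x₀ k)) (Finset.mem_univ j)
  have hRt : (R - t) ^ 2 ≤ R ^ 2 := by nlinarith [ht.1, ht.2]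
  rw [coneFun_apply]
  linarith

lemma timeDeriv_coneWeight (R : ℝ) (x₀ : Fin n → ℝ) (t : ℝ) (x : Fin n → ℝ) :
    ∂ₜ (coneWeight R x₀) (t, x)
      = deriv expNegInvGlue (coneFun R x₀ (t, x)) * (2 * (t - R)) :=
  timeDeriv_coneFun R x₀ t x ▸ dirDeriv_comp ..

lemma spaceDeriv_coneWeight (R : ℝ) (x₀ : Fin n → ℝ) (j : Fin n) (t : ℝ) (x : Fin n → ℝ) :
    ∂ₓ j (coneWeight R x₀) (t, x)
      = deriv expNegInvGlue (coneFun R x₀ (t, x)) * (-2 * (x j - x₀ j)) :=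
  spaceDeriv_coneFun R x₀ j t x ▸ dirDeriv_comp ..

lemma timeDeriv_coneWeight_nonpos {R t : ℝ} (ht : t ≤ R) (x₀ x : Fin n → ℝ) :
    ∂ₜ (coneWeight R x₀) (t, x) ≤ 0 := by
  rw [timeDeriv_coneWeight]
  exact mul_nonpos_of_nonneg_of_nonpos expNegInvGlue.monotone.deriv_nonneg (by linarith)

lemma sum_spaceDeriv_coneWeight_sq_le (R : ℝ) (x₀ : Fin n → ℝ) (t : ℝ) (x : Fin n → ℝ) :
    ∑ j, ∂ₓ j (coneWeight R x₀) (t, x) ^ 2 ≤ ∂ₜ (coneWeight R x₀) (t, x) ^ 2 := by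
  simp only [timeDeriv_coneWeight, spaceDeriv_coneWeight, mul_pow, neg_sq, ← Finset.mul_sum]
  rcases lt_or_ge (coneFun R x₀ (t, x)) 0 with hq | hq
  · simp [deriv_expNegInvGlue_of_neg hq]
  · rw [coneFun_apply, sub_nonneg, sub_sq_comm] at hq
    gcongr

lemma timeDeriv_eq_zero_of_wave {T t₀ : ℝ} {v : SpaceTimeFun n}
    (hv : IsDoublePrimitive T v (lap v)) (ht₀ : t₀ ∈ Icc 0 T) (x₀ : Fin n → ℝ) :
    ∂ₜ v (t₀, x₀) = 0 := by
  set R := t₀ + 1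
  set Φ := coneWeight R x₀
  have hR : 0 < R := add_pos_of_nonneg_of_pos ht₀.1 one_pos
  have hIcc : Icc 0 t₀ ⊆ Icc 0 R := Icc_subset_Icc_right (by simp [R])
  have hbox : (fun j => x₀ j - R) ≤ fun j => x₀ j + R := fun j =>
    (sub_le_self _ hR.le).trans (le_add_of_nonneg_right hR.le)
  have hinit : ∀ x, energyDensity v (0, x) = 0 := fun x => by
    have hgrad : ∀ j, ∂ₓ j v (0, x) = 0 := fun j => by
      simpa using spaceDeriv_congr (g' := 0) hv.eq_zero j x
    simp [energyDensity_apply, hv.timeDeriv_eq_zero, hgrad]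
  have henergy : ∫ x in Icc (fun j => x₀ j - R) (fun j => x₀ j + R),
      (Φ * energyDensity v) (t₀, x) ≤ 0 := by
    refine (setIntegral_mul_energyDensity_le ht₀.1 hbox
      (fun t ht => timeDeriv_coneWeight_nonpos (hIcc ht).2 x₀)
      (fun t _ => sum_spaceDeriv_coneWeight_sq_le R x₀ t)
      (fun t ht x j => coneWeight_eq_zero (hIcc ht))
      (fun t ht => hv.timeDeriv_timeDeriv_eq t ⟨ht.1, ht.2.trans ht₀.2⟩)).trans_eq ?_
    simp [hinit]
  have hzero : (Φ * energyDensity v) (t₀, x₀) = 0 := by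
    refine eq_zero_of_setIntegral_nonpos (f := fun x => (Φ * energyDensity v) (t₀, x))
      ((SmoothFun.continuous _).comp (by fun_prop)) (fun x => ?_) isCompact_Icc henergy ?_
    · exact mul_nonneg (coneWeight_nonneg R x₀ _)
        (energyDensity_apply v _ ▸ by positivity)
    · rw [← pi_univ_Icc, interior_pi_set finite_univ]
      simp [hR]
  have hE := (mul_eq_zero.1 hzero).resolve_left (coneWeight_center_pos (by simp [R]) x₀).ne'
  rw [energyDensity_apply, add_eq_zero_iff_of_nonneg (by positivity) (by positivity)] at hE
  exact (pow_eq_zero_iff two_ne_zero).1 hE.1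

lemma eq_zero_of_wave {T : ℝ} {v : SpaceTimeFun n} (hv : IsDoublePrimitive T v (lap v)) {t : ℝ}
    (ht : t ∈ Icc 0 T) (x : Fin n → ℝ) : v (t, x) = 0 := by
  refine (constant_of_has_deriv_right_zero (continuous_time v x).continuousOn (fun s hs => ?_)
    t ht).trans (hv.eq_zero x)
  exact timeDeriv_eq_zero_of_wave hv (Ico_subset_Icc_self hs) x ▸
    (hasDerivAt_time v s x).hasDerivWithinAt

/-! ### The divergence of a solution of the reduced equation -/

lemma isDoublePrimitive_of_wave_residual {T : ℝ} {D f : SpaceTimeFun n}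
    (h₀ : ∀ x, D (0, x) = 0) (h₁ : ∀ x, ∂ₜ D (0, x) = 0)
    (hres : IsDoublePrimitive T (∂ₜ (∂ₜ D) - lap D - f) (-lap f)) : IsDoublePrimitive T D f := by
  have hD : IsDoublePrimitive T D (∂ₜ (∂ₜ D)) := ⟨h₀, h₁, fun _ _ _ => rfl⟩
  have hw : IsDoublePrimitive T (∂ₜ (∂ₜ D) - f) (lap (∂ₜ (∂ₜ D) - f)) := by
    convert hres.add hD.lap using 1
    · abel
    · rw [lap_sub]
      abel
  exact ⟨h₀, h₁, fun t ht x => sub_eq_zero.1 (eq_zero_of_wave hw ht x)⟩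

lemma isDoublePrimitive_div_of_reduced {T : ℝ} {c f : Fin n → SpaceTimeFun n}
    (h₀ : ∀ i x, c i (0, x) = 0) (h₁ : ∀ i x, ∂ₜ (c i) (0, x) = 0)
    (hres : ∀ i, IsDoublePrimitive T (∂ₜ (∂ₜ (c i)) - lap (c i) - f i) (-∂ₓ i (div f))) :
    IsDoublePrimitive T (div c) (div f) := by
  refine isDoublePrimitive_of_wave_residual (fun x => ?_) (fun x => ?_) ?_
  · simpa [div] using div_congr (d := 0) h₀ x
  · rw [timeDeriv_div]
    simpa [div] using div_congr (d := 0) h₁ x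
  · have h := IsDoublePrimitive.div hres
    rwa [div_sub, div_sub, div_neg, ← timeDeriv_div, ← timeDeriv_div, ← lap_div] at h

end SmoothFun

open SmoothFun

theorem stmt17_general {n : ℕ} {T : ℝ} (hT : 0 < T) (C F : ℝ → (Fin n → ℝ) → Fin n → ℝ)
    (hC : ContDiff ℝ ∞ (Function.uncurry C)) (hF : ContDiff ℝ ∞ (Function.uncurry F))
    (hinit0 : ∀ x, C 0 x = 0)
    (hinit1 : ∀ x, deriv (fun t => C t x) 0 = 0)
    (hreduced : ∀ t ∈ Icc (0 : ℝ) T, ∀ x,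
      deriv (deriv (fun t' => C t' x)) t - vectorLaplacian (C t) x
        = -(∫ s in (0 : ℝ)..t, ∫ u in (0 : ℝ)..s, grad (fun y => divergence (F u) y) x)
          + F t x) :
    (∀ t ∈ Icc (0 : ℝ) T, ∀ x,
      deriv (deriv (fun t' => divergence (C t') x)) t - divergence (F t) x = 0) ∧
    (∀ t ∈ Icc (0 : ℝ) T, ∀ x,
      divergence (C t) x = ∫ s in (0 : ℝ)..t, ∫ u in (0 : ℝ)..s, divergence (F u) x) ∧
    (∀ t ∈ Icc (0 : ℝ) T, ∀ x,
      deriv (deriv (fun t' => C t' x)) t - vectorLaplacian (C t) x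
        + grad (fun y => divergence (C t) y) x = F t x) := by
  obtain ⟨c, rfl⟩ := exists_eq_vectorField hC
  obtain ⟨f, rfl⟩ := exists_eq_vectorField hF
  simp only [deriv_vectorField, divergence_vectorField, vectorLaplacian_vectorField, grad_slice,
    deriv_time] at hinit1 hreduced ⊢
  have hdiv : IsDoublePrimitive T (div c) (div f) := by
    refine isDoublePrimitive_div_of_reduced (fun i x => congrFun (hinit0 x) i)
      (fun i x => congrFun (hinit1 x) i) ((forall_isDoublePrimitive_iff hT).2 fun t ht x => ?_)
    simp only [vectorField_sub, vectorField_neg, hreduced t ht x, intervalIntegral.integral_neg,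
      add_sub_cancel_right]
  refine ⟨fun t ht x => sub_eq_zero.2 (hdiv.timeDeriv_timeDeriv_eq t ht x),
    (isDoublePrimitive_iff hT).1 hdiv, fun t ht x => ?_⟩
  rw [hreduced t ht x, (forall_isDoublePrimitive_iff hT).1 hdiv.spaceDeriv t ht x]
  abel

end

/-- Solving the reduced equation `∂_t²C - ΔC = -∫₀ᵗ∫₀ˢ∇div F + F` with vanishing initial
data and `F` vanishing for small times: then `∂_t² div C - div F` vanishes identically,
`div C(t) = ∫₀ᵗ∫₀ˢ div F`, and `C` solves the original system
`∂_t²C - ΔC + ∇ div C = F` on `[0,T]`. -/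
theorem stmt17 (T ε : ℝ) (hT : 0 < T) (hε : 0 < ε)
    (C F : ℝ → (Fin 3 → ℝ) → Fin 3 → ℝ)
    (hC : ContDiff ℝ (⊤ : ℕ∞) (Function.uncurry C)) (hF : ContDiff ℝ (⊤ : ℕ∞) (Function.uncurry F))
    (hFsmall : ∀ t ∈ Set.Icc (0 : ℝ) ε, ∀ x, F t x = 0)
    (hinit0 : ∀ x, C 0 x = 0)
    (hinit1 : ∀ x, deriv (fun t => C t x) 0 = 0)
    (hreduced : ∀ t ∈ Set.Icc (0 : ℝ) T, ∀ x,
      deriv (deriv (fun t' => C t' x)) t - lap3 (C t) x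
        = -(∫ s in (0 : ℝ)..t, ∫ u in (0 : ℝ)..s, grad3 (fun y => div3 (F u) y) x)
          + F t x) :
    (∀ t ∈ Set.Icc (0 : ℝ) T, ∀ x,
      deriv (deriv (fun t' => div3 (C t') x)) t - div3 (F t) x = 0) ∧
    (∀ t ∈ Set.Icc (0 : ℝ) T, ∀ x,
      div3 (C t) x = ∫ s in (0 : ℝ)..t, ∫ u in (0 : ℝ)..s, div3 (F u) x) ∧
    (∀ t ∈ Set.Icc (0 : ℝ) T, ∀ x,
      deriv (deriv (fun t' => C t' x)) t - lap3 (C t) x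
        + grad3 (fun y => div3 (C t) y) x = F t x) :=
  stmt17_general hT C F hC hF hinit0 hinit1 hreduced
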